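/- The travelling-wave profile ψ(y) = 1 − (1 + exp(y/√6))^{−2} satisfies the travelling-wave ordinary differential equation associated with the KPP equation with wave speed c = 5/√6: for every y ∈ ℝ, ψ''(y) + (5/√6) ψ'(y) + ψ(y)(ψ(y) − 1) = 0. -/

import Mathlib

/-!
With `s(y) = (1 + exp (y/√6))⁻¹` the profile is `ψ = 1 - s²`, and `s` solves the logistic equation
`s' = (s² - s)/√6`. Hence `ψ'` and `ψ''` are polynomials in `s`, namely `2 (s² - s³)/√6` and
`(2s - 3s²)(s² - s)/3`, and the travelling-wave equation becomes a polynomial identity in `s`.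
-/

/-- The logistic equation `s' = (s² - s)/√6`. -/
lemma kpp_logistic_hasDerivAt (y : ℝ) :
    HasDerivAt (fun x : ℝ => (1 + Real.exp (x / Real.sqrt 6))⁻¹)
      (((1 + Real.exp (y / Real.sqrt 6))⁻¹ ^ 2 - (1 + Real.exp (y / Real.sqrt 6))⁻¹)
        / Real.sqrt 6) y := by
  have hne : 1 + Real.exp (y / Real.sqrt 6) ≠ 0 := by positivity
  have h := ((((hasDerivAt_id' y).div_const (Real.sqrt 6)).exp).const_add 1).fun_inv hne
  refine h.congr_deriv ?_
  field_simp
  ring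

/-- The travelling-wave profile `ψ(y) = 1 − (1 + exp(y/√6))⁻²` satisfies the travelling-wave
ODE associated with the KPP equation with wave speed `c = 5/√6`:
`ψ''(y) + (5/√6) ψ'(y) + ψ(y)(ψ(y) − 1) = 0` for every `y ∈ ℝ`. -/
theorem kpp_travelling_wave_ode (ψ : ℝ → ℝ)
    (hψ : ∀ x : ℝ, ψ x = 1 - (1 + Real.exp (x / Real.sqrt 6))⁻¹ ^ 2) :
    ∀ y : ℝ,
      deriv (deriv ψ) y + (5 / Real.sqrt 6) * deriv ψ y + ψ y * (ψ y - 1) = 0 := by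
  intro y
  obtain ⟨s, hs⟩ : ∃ s : ℝ → ℝ, s = fun x => (1 + Real.exp (x / Real.sqrt 6))⁻¹ := ⟨_, rfl⟩
  have hd : ∀ x, HasDerivAt s ((s x ^ 2 - s x) / Real.sqrt 6) x := by
    subst hs
    exact kpp_logistic_hasDerivAt
  have hψs : ψ = fun x => 1 - s x ^ 2 := by
    funext x
    rw [hψ, hs]
  have h1 : deriv ψ = fun x => 2 * (s x ^ 2 - s x ^ 3) / Real.sqrt 6 := by
    funext x
    rw [hψs, (((hd x).fun_pow 2).const_sub 1).deriv]
    push_cast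
    ring
  have h6 : Real.sqrt 6 ^ 2 = 6 := Real.sq_sqrt (by norm_num)
  have h6ne : Real.sqrt 6 ≠ 0 := by positivity
  have h2 : deriv (deriv ψ) y = (2 * s y - 3 * s y ^ 2) * (s y ^ 2 - s y) / 3 := by
    rw [h1, (((((hd y).fun_pow 2).fun_sub ((hd y).fun_pow 3)).const_mul 2).div_const _).deriv]
    field_simp
    rw [h6]
    push_cast
    ring
  rw [h2, h1, hψs]
  field_simp
  rw [h6]
  ring
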